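/- Let S ∈ sp(n,ℂ) and let S_i be its part corresponding to the non-real eigenvalues ±ω_1,…,±ω_{n_1} (listed with multiplicities, Im ω_j > 0), and let ℓ+1 be the dimension of the largest Jordan block of S_i. Then there exist complex quadratic forms Q_{jk} on ℂ^{2n} (1 ≤ j ≤ n_1, 0 ≤ k ≤ ℓ) such that, for all t for which cos(tS_i) is invertible, σ(w, tan(tS_i)w) = Σ_{j=1}^{n_1} Σ_{k=0}^{ℓ} t^k tan^{(k)}(ω_j t) Q_{jk}(w) for all w, where tan^{(k)} denotes the k-th derivative of the tangent function. -/

import Mathlib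

open MeasureTheory Complex Matrix

noncomputable section

/-- Index type for `2n`-dimensional (symplectic) vectors: `X`-coordinates `inl j`,
`Y`-coordinates `inr j`. -/
abbrev Idx (n : ℕ) := Fin n ⊕ Fin n

/-- The standard symplectic matrix `J = [[0, I],[-I, 0]]` over `ℂ`. -/
def Jmat (n : ℕ) : Matrix (Idx n) (Idx n) ℂ := Matrix.fromBlocks 0 1 (-1) 0

/-- The standard symplectic matrix `J = [[0, I],[-I, 0]]` over `ℝ`. -/
def JmatR (n : ℕ) : Matrix (Idx n) (Idx n) ℝ := Matrix.fromBlocks 0 1 (-1) 0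

/-- The standard symplectic form `σ(z,w) = ᵗz J w` on `ℂ^{2n}`. -/
def sigmaC (n : ℕ) (z w : Idx n → ℂ) : ℂ := z ⬝ᵥ (Jmat n).mulVec w

/-- The standard symplectic form on `ℝ^{2n}`. -/
def sigmaR (n : ℕ) (v w : Idx n → ℝ) : ℝ := v ⬝ᵥ (JmatR n).mulVec w

/-- Inclusion of real vectors into `ℂ^{2n}`. -/
def realVec (n : ℕ) (v : Idx n → ℝ) : Idx n → ℂ := fun i => (v i : ℂ)

/-- Complex conjugation on `ℂ^{2n}` relative to the real form `ℝ^{2n}`. -/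
def conjVec (n : ℕ) (z : Idx n → ℂ) : Idx n → ℂ := fun i => (starRingEnd ℂ) (z i)

/-- `S ∈ sp(n, ℂ)`, i.e. `σ(Sz, w) + σ(z, Sw) = 0` for all `z, w`. -/
def InSp (n : ℕ) (S : Matrix (Idx n) (Idx n) ℂ) : Prop := Sᵀ * Jmat n + Jmat n * S = 0

/-- `Re Q_S ≥ 0`: the real part of the quadratic form `Q_S(v) = σ(v, Sv)` is
positive semi-definite on `ℝ^{2n}`. -/
def RePosQ (n : ℕ) (S : Matrix (Idx n) (Idx n) ℂ) : Prop :=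
  ∀ v : Idx n → ℝ, 0 ≤ (sigmaC n (realVec n v) (S.mulVec (realVec n v))).re

/-- The generalized eigenspace `V_μ` of the matrix `S` for the eigenvalue `μ`. -/
def genEig (n : ℕ) (S : Matrix (Idx n) (Idx n) ℂ) (μ : ℂ) : Submodule ℂ (Idx n → ℂ) :=
  Module.End.maxGenEigenspace (Matrix.mulVecLin S) μ

/-- `V_r`: the sum of the generalized eigenspaces of `S` for real eigenvalues. -/
def Vreal (n : ℕ) (S : Matrix (Idx n) (Idx n) ℂ) : Submodule ℂ (Idx n → ℂ) :=
  ⨆ lam : ℝ, genEig n S (lam : ℂ)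

/-- `V_i`: the sum of the generalized eigenspaces of `S` for non-real eigenvalues. -/
def Vimag (n : ℕ) (S : Matrix (Idx n) (Idx n) ℂ) : Submodule ℂ (Idx n → ℂ) :=
  ⨆ μ : {z : ℂ // z.im ≠ 0}, genEig n S (μ : ℂ)

/-- `Sr` is the "real part" `S_r` of `S`: it agrees with `S` on `V_r` and vanishes on `V_i`. -/
def IsRealPart (n : ℕ) (S Sr : Matrix (Idx n) (Idx n) ℂ) : Prop :=
  (∀ v ∈ Vreal n S, Sr.mulVec v = S.mulVec v) ∧ ∀ v ∈ Vimag n S, Sr.mulVec v = 0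

/-- `Si` is the "imaginary part" `S_i` of `S`: it vanishes on `V_r` and agrees with `S`
on `V_i`. -/
def IsImagPart (n : ℕ) (S Si : Matrix (Idx n) (Idx n) ℂ) : Prop :=
  (∀ v ∈ Vreal n S, Si.mulVec v = 0) ∧ ∀ v ∈ Vimag n S, Si.mulVec v = S.mulVec v

/-- Condition (R): `V_λ ⊕ V_{−λ}` is invariant under complex conjugation for every
real `λ ≠ 0`. -/
def CondR (n : ℕ) (S : Matrix (Idx n) (Idx n) ℂ) : Prop :=
  ∀ lam : ℝ, lam ≠ 0 →
    ∀ z ∈ genEig n S (lam : ℂ) ⊔ genEig n S (-(lam : ℂ)),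
      conjVec n z ∈ genEig n S (lam : ℂ) ⊔ genEig n S (-(lam : ℂ))

/-- `ν = Σ_j ν_j`: the sum of the imaginary parts of the eigenvalues of `S` lying in the
upper half plane, counted with multiplicity. -/
def nuTotal (n : ℕ) (S : Matrix (Idx n) (Idx n) ℂ) : ℝ :=
  (S.charpoly.roots.map (fun z => max z.im 0)).sum

/-- `S_i ≠ 0`, i.e. `S` has at least one non-real eigenvalue. -/
def HasNonrealEig (n : ℕ) (S : Matrix (Idx n) (Idx n) ℂ) : Prop :=
  ∃ z ∈ S.charpoly.roots, z.im ≠ 0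

/-- Semisimple (= diagonalizable over `ℂ`) matrix. -/
def IsSemisimpleMat (n : ℕ) (D : Matrix (Idx n) (Idx n) ℂ) : Prop :=
  ∃ (P : Matrix (Idx n) (Idx n) ℂ) (d : Idx n → ℂ), IsUnit P ∧ D = P * Matrix.diagonal d * P⁻¹

/-- `S = D + N` is the Jordan decomposition of `S`: `D` semisimple, `N` nilpotent,
`DN = ND`. -/
def IsJordanDecomp (n : ℕ) (S D N : Matrix (Idx n) (Idx n) ℂ) : Prop :=
  S = D + N ∧ IsSemisimpleMat n D ∧ IsNilpotent N ∧ D * N = N * D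

/-- The matrix exponential `exp M = Σ M^k / k!`. -/
def matExp {ι : Type} [Fintype ι] [DecidableEq ι] (M : Matrix ι ι ℂ) : Matrix ι ι ℂ :=
  ∑' k : ℕ, ((k.factorial : ℂ)⁻¹) • M ^ k

/-- The matrix cosine `cos M = (exp(iM) + exp(-iM))/2`. -/
def matCos {ι : Type} [Fintype ι] [DecidableEq ι] (M : Matrix ι ι ℂ) : Matrix ι ι ℂ :=
  (2 : ℂ)⁻¹ • (matExp (Complex.I • M) + matExp (-(Complex.I • M)))

/-- The matrix sine `sin M = (exp(iM) - exp(-iM))/(2i)`. -/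
def matSin {ι : Type} [Fintype ι] [DecidableEq ι] (M : Matrix ι ι ℂ) : Matrix ι ι ℂ :=
  (2 * Complex.I)⁻¹ • (matExp (Complex.I • M) - matExp (-(Complex.I • M)))

/-- The matrix tangent `tan M = (sin M)(cos M)⁻¹` (junk value if `cos M` is singular). -/
def matTan {ι : Type} [Fintype ι] [DecidableEq ι] (M : Matrix ι ι ℂ) : Matrix ι ι ℂ :=
  matSin M * (matCos M)⁻¹

/-! On a matrix `X` with `(M - z) ^ L * X = 0`, the matrices `exp M`, `cos M` and `sin M` act as the
Taylor polynomials at `z` of the scalar functions, evaluated at `M - z`. By the Leibniz rule Taylor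
polynomials multiply like the functions modulo `(M - z) ^ L`, so `sin = cos * tan` shows that
`tan M` acts on `X` as the Taylor polynomial of `tan` as soon as `cos M` is invertible; if
`cos z = 0`, invertibility forces `X = 0`.

Take `M = t • A` with `A = S_i`, and write `1 = ∑ P μ` with the columns of `P μ` in the generalized
eigenspace of `S` at `μ`, so that `tan (t • A)` is the sum of the `tan (t • A) * P μ`. A real `μ`
contributes nothing, because `A` vanishes there and `tan 0 = 0`. The terms of `μ` and `-μ` combine
because `tan` is odd. An eigenvalue listed `m` times gets its coefficient divided by `m`. -/

section Taylor

open PowerSeries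
open scoped ContDiff

variable {𝕜 R : Type*} [NontriviallyNormedField 𝕜] [Ring R] [Algebra 𝕜 R]

/-- The formal Taylor series `∑ f⁽ᵏ⁾(z)/k! Xᵏ` of `f` at `z`. -/
def taylorSeries (f : 𝕜 → 𝕜) (z : 𝕜) : 𝕜⟦X⟧ :=
  .mk fun k ↦ iteratedDeriv k f z / (k.factorial : 𝕜)

/-- The Taylor polynomial of `f` at `z` with terms of degree `< L`, evaluated at an algebra
element `a`; it stands for `f (z + a)` on elements annihilated by `a ^ L`. -/
def taylorEval (f : 𝕜 → 𝕜) (z : 𝕜) (L : ℕ) (a : R) : R :=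
  Polynomial.aeval a (trunc L (taylorSeries f z))

theorem coeff_taylorSeries (f : 𝕜 → 𝕜) (z : 𝕜) (k : ℕ) :
    coeff k (taylorSeries f z) = iteratedDeriv k f z / (k.factorial : 𝕜) :=
  coeff_mk _ _

theorem taylorSeries_mul [CharZero 𝕜] {f g : 𝕜 → 𝕜} {z : 𝕜} (hf : ContDiffAt 𝕜 ∞ f z)
    (hg : ContDiffAt 𝕜 ∞ g z) :
    taylorSeries (f * g) z = taylorSeries f z * taylorSeries g z := by
  ext k
  rw [coeff_taylorSeries, coeff_mul, Finset.Nat.sum_antidiagonal_eq_sum_range_succ_mk,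
    iteratedDeriv_mul (contDiffAt_infty.1 hf k) (contDiffAt_infty.1 hg k), Finset.sum_div]
  refine Finset.sum_congr rfl fun i hi ↦ ?_
  rw [coeff_taylorSeries, coeff_taylorSeries,
    Nat.cast_choose 𝕜 (Nat.lt_succ_iff.1 (Finset.mem_range.1 hi))]
  field_simp [Nat.factorial_ne_zero]

theorem taylorEval_eq_sum (f : 𝕜 → 𝕜) (z : 𝕜) (L : ℕ) (a : R) :
    taylorEval f z L a =
      ∑ k ∈ Finset.range L, (iteratedDeriv k f z / (k.factorial : 𝕜)) • a ^ k := by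
  simp only [taylorEval, Polynomial.aeval_def, eval₂_trunc_eq_sum_range, coeff_taylorSeries,
    Algebra.smul_def]

theorem taylorEval_one (f : 𝕜 → 𝕜) (z : 𝕜) (a : R) : taylorEval f z 1 a = f z • 1 := by
  simp [taylorEval_eq_sum]

theorem taylorEval_add {f g : 𝕜 → 𝕜} {z : 𝕜} (hf : ContDiffAt 𝕜 ∞ f z)
    (hg : ContDiffAt 𝕜 ∞ g z) (L : ℕ) (a : R) :
    taylorEval (f + g) z L a = taylorEval f z L a + taylorEval g z L a := by
  simp only [taylorEval_eq_sum, add_div, add_smul, Finset.sum_add_distrib,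
    iteratedDeriv_add (contDiffAt_infty.1 hf _) (contDiffAt_infty.1 hg _)]

theorem taylorEval_sub {f g : 𝕜 → 𝕜} {z : 𝕜} (hf : ContDiffAt 𝕜 ∞ f z)
    (hg : ContDiffAt 𝕜 ∞ g z) (L : ℕ) (a : R) :
    taylorEval (f - g) z L a = taylorEval f z L a - taylorEval g z L a := by
  simp only [taylorEval_eq_sum, sub_div, sub_smul, Finset.sum_sub_distrib,
    iteratedDeriv_sub (contDiffAt_infty.1 hf _) (contDiffAt_infty.1 hg _)]

theorem taylorEval_const_smul (c : 𝕜) (f : 𝕜 → 𝕜) (z : 𝕜) (L : ℕ) (a : R) :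
    taylorEval (c • f) z L a = c • taylorEval f z L a := by
  simp only [taylorEval_eq_sum, iteratedDeriv_const_smul_field, smul_eq_mul, mul_div_assoc,
    mul_smul, Finset.smul_sum]

theorem taylorEval_comp_const_mul {f : 𝕜 → 𝕜} (hf : ContDiff 𝕜 ∞ f) (c z : 𝕜) (L : ℕ) (a : R) :
    taylorEval (fun x ↦ f (c * x)) z L a = taylorEval f (c * z) L (c • a) := by
  simp only [taylorEval_eq_sum, iteratedDeriv_comp_const_mul (contDiff_infty.1 hf _), smul_pow,
    smul_smul]
  refine Finset.sum_congr rfl fun k _ ↦ congrArg (· • a ^ k) ?_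
  ring

theorem commute_taylorEval (f : 𝕜 → 𝕜) (z : 𝕜) (L : ℕ) (a : R) :
    Commute a (taylorEval f z L a) := by
  rw [taylorEval_eq_sum]
  exact Commute.sum_right _ _ _ fun k _ ↦ (Commute.self_pow a k).smul_right _

theorem aeval_trunc_mul_mul {S A : Type*} [CommRing S] [Ring A] [Algebra S A] {a m : A} {L : ℕ}
    (h : a ^ L * m = 0) (φ ψ : S⟦X⟧) :
    Polynomial.aeval a (trunc L (φ * ψ)) * m =
      Polynomial.aeval a (trunc L φ) * (Polynomial.aeval a (trunc L ψ) * m) := by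
  have hdvd : Polynomial.X ^ L ∣ trunc L (φ * ψ) - trunc L φ * trunc L ψ := by
    refine Polynomial.X_pow_dvd_iff.2 fun d hd ↦ ?_
    rw [Polynomial.coeff_sub, coeff_trunc, if_pos hd, coeff_mul_eq_coeff_trunc_mul_trunc φ ψ hd,
      ← Polynomial.coe_mul, Polynomial.coeff_coe, sub_self]
  obtain ⟨q, hq⟩ := hdvd
  rw [← mul_assoc, ← map_mul, ← sub_eq_zero, ← sub_mul, ← map_sub, hq, mul_comm, map_mul,
    map_pow, Polynomial.aeval_X, mul_assoc, h, mul_zero]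

theorem taylorEval_mul_mul [CharZero 𝕜] {f g : 𝕜 → 𝕜} {z : 𝕜} (hf : ContDiffAt 𝕜 ∞ f z)
    (hg : ContDiffAt 𝕜 ∞ g z) {L : ℕ} {a m : R} (h : a ^ L * m = 0) :
    taylorEval (f * g) z L a * m = taylorEval f z L a * (taylorEval g z L a * m) := by
  simp only [taylorEval, taylorSeries_mul hf hg, aeval_trunc_mul_mul h]

theorem taylorEval_congr {f g : 𝕜 → 𝕜} {z : 𝕜} (h : f =ᶠ[nhds z] g) (L : ℕ) (a : R) :
    taylorEval f z L a = taylorEval g z L a := by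
  simp only [taylorEval_eq_sum, h.iteratedDeriv_eq]

end Taylor

section MatrixFunctions

open NormedSpace
open scoped ContDiff

theorem exp_mul_eq_sum_of_pow_mul_eq_zero (𝕂 : Type*) {𝔸 : Type*} [RCLike 𝕂] [NormedRing 𝔸]
    [NormedAlgebra 𝕂 𝔸] [CompleteSpace 𝔸] {a m : 𝔸} {L : ℕ} (h : a ^ L * m = 0) :
    exp a * m = ∑ k ∈ Finset.range L, ((k.factorial : 𝕂)⁻¹ • a ^ k) * m := by
  refine ((exp_series_hasSum_exp' (𝕂 := 𝕂) a).mul_right m).unique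
    (hasSum_sum_of_ne_finset_zero fun k hk ↦ ?_)
  obtain ⟨j, rfl⟩ := Nat.exists_eq_add_of_le' (not_lt.1 (mt Finset.mem_range.2 hk))
  rw [smul_mul_assoc, pow_add, mul_assoc, h, mul_zero, smul_zero]

theorem exp_mul_eq_taylorEval_mul {𝔸 : Type*} [NormedRing 𝔸] [NormedAlgebra ℂ 𝔸]
    [CompleteSpace 𝔸] {a m : 𝔸} {z : ℂ} {L : ℕ} (h : (a - z • 1) ^ L * m = 0) :
    exp a * m = taylorEval Complex.exp z L (a - z • 1) * m := by
  let _ := NormedAlgebra.restrictScalars ℚ ℂ 𝔸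
  have hexp : exp (z • (1 : 𝔸)) = Complex.exp z • 1 := by
    rw [← Algebra.algebraMap_eq_smul_one, ← algebraMap_exp_comm, ← Complex.exp_eq_exp_ℂ,
      Algebra.algebraMap_eq_smul_one]
  have hcomm : Commute (z • (1 : 𝔸)) (a - z • 1) := (Commute.one_left _).smul_left z
  calc exp a * m = exp (z • (1 : 𝔸)) * (NormedSpace.exp (a - z • (1 : 𝔸)) * m) := by
        rw [← mul_assoc, ← exp_add_of_commute hcomm, add_sub_cancel]
    _ = taylorEval Complex.exp z L (a - z • 1) * m := by
        rw [hexp, exp_mul_eq_sum_of_pow_mul_eq_zero ℂ h, taylorEval_eq_sum, smul_one_mul,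
          ← Finset.sum_mul, ← smul_mul_assoc, Finset.smul_sum]
        simp only [iteratedDeriv_eq_iterate, Complex.iter_deriv_exp, smul_smul, div_eq_mul_inv]

variable {ι : Type} [Fintype ι] [DecidableEq ι] {M X : Matrix ι ι ℂ} {z : ℂ} {L : ℕ}

theorem matExp_eq_exp (M : Matrix ι ι ℂ) : matExp M = exp M :=
  (congrFun (exp_eq_tsum ℂ) M).symm

theorem commute_matSin_matCos (M : Matrix ι ι ℂ) : Commute (matSin M) (matCos M) := by
  have h := Commute.refl (I • M)
  simp only [matSin, matCos, matExp_eq_exp]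
  exact (((h.exp.sub_left h.neg_left.exp).add_right
    (h.neg_right.exp.sub_left h.neg_left.neg_right.exp)).smul_left _).smul_right _

theorem matExp_smul_mul (h : (M - z • 1) ^ L * X = 0) (c : ℂ) :
    matExp (c • M) * X = taylorEval (fun x ↦ Complex.exp (c * x)) z L (M - z • 1) * X := by
  have hc : (c • M - (c * z) • 1) = c • (M - z • 1) := by rw [smul_sub, smul_smul]
  rw [taylorEval_comp_const_mul Complex.contDiff_exp, ← hc, matExp_eq_exp]
  open scoped Matrix.Norms.Operator in
  exact exp_mul_eq_taylorEval_mul (by rw [hc, smul_pow, smul_mul_assoc, h, smul_zero])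

theorem matCos_mul (h : (M - z • 1) ^ L * X = 0) :
    matCos M * X = taylorEval Complex.cos z L (M - z • 1) * X := by
  have hcos : Complex.cos =
      (2 : ℂ)⁻¹ • ((fun x ↦ Complex.exp (I * x)) + fun x ↦ Complex.exp (-I * x)) := by
    ext x
    simp [Complex.cos, mul_comm, div_eq_inv_mul]
  rw [matCos, ← neg_smul, smul_mul_assoc, add_mul, matExp_smul_mul h, matExp_smul_mul h, hcos,
    taylorEval_const_smul, taylorEval_add (by fun_prop) (by fun_prop), smul_mul_assoc, add_mul]

theorem matSin_mul (h : (M - z • 1) ^ L * X = 0) :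
    matSin M * X = taylorEval Complex.sin z L (M - z • 1) * X := by
  have hsin : Complex.sin =
      (2 * I)⁻¹ • ((fun x ↦ Complex.exp (I * x)) - fun x ↦ Complex.exp (-I * x)) := by
    ext x
    simp only [Complex.sin, Pi.smul_apply, Pi.sub_apply, smul_eq_mul, neg_mul, mul_comm x I,
      mul_inv, Complex.inv_I, div_eq_mul_inv]
    ring
  rw [matSin, ← neg_smul, smul_mul_assoc, sub_mul, matExp_smul_mul h, matExp_smul_mul h, hsin,
    taylorEval_const_smul, taylorEval_sub (by fun_prop) (by fun_prop), smul_mul_assoc, sub_mul]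

theorem eq_zero_of_isUnit_det_matCos_of_cos_eq_zero (hM : IsUnit (matCos M).det)
    (hz : Complex.cos z = 0) (h : (M - z • 1) ^ L * X = 0) : X = 0 := by
  induction L with
  | zero => simpa using h
  | succ L ih =>
    refine ih ?_
    have hker : (M - z • 1) ^ 1 * ((M - z • 1) ^ L * X) = 0 := by
      rw [← mul_assoc, ← pow_add, add_comm, h]
    have hcos : matCos M * ((M - z • 1) ^ L * X) = 0 := by
      rw [matCos_mul hker, taylorEval_one, hz, zero_smul, zero_mul]
    exact ((Matrix.isUnit_iff_isUnit_det _).2 hM).mul_right_eq_zero.1 hcos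

theorem sin_eventuallyEq_cos_mul_tan (hz : Complex.cos z ≠ 0) :
    Complex.sin =ᶠ[nhds z] Complex.cos * Complex.tan := by
  filter_upwards [Complex.continuous_cos.continuousAt.eventually_ne hz] with x hx
  rw [Pi.mul_apply, mul_comm, Complex.tan_mul_cos hx]

theorem matCos_mul_matTan (hM : IsUnit (matCos M).det) : matCos M * matTan M = matSin M := by
  rw [matTan, ← mul_assoc, ← (commute_matSin_matCos M).eq, mul_assoc, Matrix.mul_nonsing_inv _ hM,
    mul_one]

theorem matTan_mul (hM : IsUnit (matCos M).det) (h : (M - z • 1) ^ L * X = 0) :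
    matTan M * X = taylorEval Complex.tan z L (M - z • 1) * X := by
  by_cases hz : Complex.cos z = 0
  · rw [eq_zero_of_isUnit_det_matCos_of_cos_eq_zero hM hz h, mul_zero, mul_zero]
  have h' : (M - z • 1) ^ L * (taylorEval Complex.tan z L (M - z • 1) * X) = 0 := by
    rw [← mul_assoc, ((commute_taylorEval _ _ _ _).pow_left L).eq, mul_assoc, h, mul_zero]
  refine ((Matrix.isUnit_iff_isUnit_det _).2 hM).mul_left_cancel ?_
  calc matCos M * (matTan M * X)
      = taylorEval Complex.sin z L (M - z • 1) * X := by
        rw [← mul_assoc, matCos_mul_matTan hM, matSin_mul h]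
    _ = taylorEval Complex.cos z L (M - z • 1) *
          (taylorEval Complex.tan z L (M - z • 1) * X) := by
        rw [taylorEval_congr (sin_eventuallyEq_cos_mul_tan hz), taylorEval_mul_mul
          Complex.contDiff_cos.contDiffAt (Complex.contDiffAt_tan.2 hz) h]
    _ = matCos M * (taylorEval Complex.tan z L (M - z • 1) * X) := (matCos_mul h').symm

theorem matTan_smul_mul {A : Matrix ι ι ℂ} {μ t : ℂ} (ht : IsUnit (matCos (t • A)).det)
    (h : (A - μ • 1) ^ L * X = 0) :
    matTan (t • A) * X = ∑ k ∈ Finset.range L, (t ^ k * iteratedDeriv k Complex.tan (μ * t)) •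
      (((k.factorial : ℂ)⁻¹ • (A - μ • 1) ^ k) * X) := by
  have hsub : t • A - (μ * t) • 1 = t • (A - μ • 1) := by rw [smul_sub, smul_smul, mul_comm μ]
  rw [matTan_mul (z := μ * t) (L := L) ht
    (by rw [hsub, smul_pow, smul_mul_assoc, h, smul_zero]), hsub, taylorEval_eq_sum,
    Finset.sum_mul]
  refine Finset.sum_congr rfl fun k _ ↦ ?_
  rw [smul_pow, smul_smul, smul_mul_assoc, smul_mul_assoc, smul_smul]
  congr 1
  ring

end MatrixFunctions

section Spectral

open Module.End

theorem maxGenEigenspace_le_of_eqOn {R V : Type*} [CommRing R] [AddCommGroup V] [Module R V]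
    {f g : Module.End R V} {μ : R} (h : Set.EqOn g f (f.maxGenEigenspace μ)) :
    f.maxGenEigenspace μ ≤ g.maxGenEigenspace μ := by
  have hmaps :
      Set.MapsTo (f - μ • (1 : Module.End R V)) (f.maxGenEigenspace μ) (f.maxGenEigenspace μ) :=
    mapsTo_maxGenEigenspace_of_comm
      ((Commute.refl f).sub_right ((Commute.one_right f).smul_right μ)) μ
  have hpow (k : ℕ) :
      Set.EqOn ((g - μ • (1 : Module.End R V)) ^ k : Module.End R V)
        ((f - μ • (1 : Module.End R V)) ^ k : Module.End R V) (f.maxGenEigenspace μ) := by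
    induction k with
    | zero => exact fun v _ ↦ rfl
    | succ k ih =>
      intro v hv
      have hfg : (g - μ • 1) v = (f - μ • 1) v := congrArg (· - μ • v) (h hv)
      rw [pow_succ, pow_succ, Module.End.mul_apply, Module.End.mul_apply, hfg, ih (hmaps hv)]
  intro v hv
  obtain ⟨k, hk⟩ := (mem_maxGenEigenspace f μ v).1 hv
  exact (mem_maxGenEigenspace g μ v).2 ⟨k, (hpow k hv).trans hk⟩

variable {ι K : Type*} [Fintype ι] [DecidableEq ι] [Field K]

theorem maxGenEigenspace_mulVecLin_eq_bot {A : Matrix ι ι K} {μ : K} (h : ¬A.charpoly.IsRoot μ) :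
    maxGenEigenspace A.mulVecLin μ = ⊥ := by
  by_contra hne
  have hgen : HasUnifEigenvalue A.mulVecLin μ ⊤ := hne
  have hspec := (hgen.lt one_pos).mem_spectrum
  rw [← Matrix.toLin'_apply', Matrix.spectrum_toLin'] at hspec
  exact h (Matrix.mem_spectrum_iff_isRoot_charpoly.1 hspec)

theorem iSup_roots_maxGenEigenspace_mulVecLin_eq_top [DecidableEq K] [IsAlgClosed K]
    (A : Matrix ι ι K) : ⨆ μ ∈ A.charpoly.roots.toFinset, maxGenEigenspace A.mulVecLin μ = ⊤ := by
  rw [← top_le_iff, ← iSup_maxGenEigenspace_eq_top A.mulVecLin]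
  refine iSup_le fun μ ↦ ?_
  by_cases hμ : A.charpoly.IsRoot μ
  · exact le_iSup₂_of_le μ
      (Multiset.mem_toFinset.2 ((Polynomial.mem_roots A.charpoly_monic.ne_zero).2 hμ)) le_rfl
  · exact (maxGenEigenspace_mulVecLin_eq_bot hμ).trans_le bot_le

theorem exists_matrix_sum_eq_one_of_iSup_eq_top {κ : Type*} {s : Finset κ}
    {V : κ → Submodule K (ι → K)} (h : ⨆ i ∈ s, V i = ⊤) :
    ∃ P : κ → Matrix ι ι K, ∑ i ∈ s, P i = 1 ∧ ∀ i j, P i *ᵥ Pi.single j 1 ∈ V i := by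
  have hcol (j : ι) : ∃ v : Π i, V i, ∑ i ∈ s, (v i : ι → K) = Pi.single j 1 :=
    (Submodule.mem_iSup_finset_iff_exists_sum V _).1 (h ▸ Submodule.mem_top)
  choose v hv using hcol
  have hP (i : κ) (j : ι) :
      Matrix.of (fun a b ↦ (v b i : ι → K) a) *ᵥ Pi.single j 1 = v j i := by
    ext a
    simp
  refine ⟨fun i ↦ .of fun a b ↦ (v b i : ι → K) a, ?_, fun i j ↦ by rw [hP]; exact (v j i).2⟩
  refine Matrix.ext_of_mulVec_single fun j ↦ ?_
  rw [Matrix.sum_mulVec, Matrix.one_mulVec]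
  exact (Finset.sum_congr rfl fun i _ ↦ hP i j).trans (hv j)

theorem mul_eq_zero_of_mulVec_single_mem {κ R : Type*} [Fintype κ] [DecidableEq κ] [Semiring R]
    {B P : Matrix κ κ R} {V : Set (κ → R)} (hP : ∀ j, P *ᵥ Pi.single j 1 ∈ V)
    (hB : ∀ v ∈ V, B *ᵥ v = 0) : B * P = 0 :=
  Matrix.ext_of_mulVec_single fun j ↦ by
    rw [← Matrix.mulVec_mulVec, hB _ (hP j), Matrix.zero_mulVec]

theorem neg_mem_charpoly_roots {J A : Matrix ι ι K} (hJ : IsUnit J) (h : Aᵀ * J + J * A = 0)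
    {μ : K} (hμ : μ ∈ A.charpoly.roots) : -μ ∈ A.charpoly.roots := by
  obtain ⟨U, rfl⟩ := hJ
  have hconj : (↑U : Matrix ι ι K) * -A * (↑U : Matrix ι ι K)⁻¹ = Aᵀ := by
    rw [← Matrix.coe_units_inv, mul_neg, ← eq_neg_of_add_eq_zero_left h, mul_assoc,
      Units.mul_inv, mul_one]
  have hchar : (-A).charpoly = A.charpoly := by
    rw [← Matrix.charpoly_units_conj U (-A), hconj, Matrix.charpoly_transpose]
  rw [Polynomial.mem_roots A.charpoly_monic.ne_zero] at hμ ⊢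
  rw [← hchar, ← Matrix.mem_spectrum_iff_isRoot_charpoly, ← spectrum.neg_eq]
  exact Set.neg_mem_neg.2 (Matrix.mem_spectrum_iff_isRoot_charpoly.2 hμ)

end Spectral

section Regrouping

theorem sum_filter_im_ne_zero {M : Type*} [AddCommMonoid M] {s : Finset ℂ}
    (hs : ∀ z ∈ s, -z ∈ s) (F : ℂ → M) :
    ∑ z ∈ s with z.im ≠ 0, F z = ∑ z ∈ s with 0 < z.im, (F z + F (-z)) := by
  have hneg : ∑ z ∈ s with z.im < 0, F z = ∑ z ∈ s with 0 < z.im, F (-z) :=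
    Finset.sum_nbij' (-·) (-·) (by simp +contextual [hs]) (by simp +contextual [hs]) (by simp)
      (by simp) (by simp)
  have hdisj : Disjoint (s.filter (0 < ·.im)) (s.filter (·.im < 0)) :=
    Finset.disjoint_filter.2 fun _ _ ↦ lt_asymm
  rw [Finset.sum_add_distrib, ← hneg, ← Finset.sum_union hdisj, ← Finset.filter_or]
  simp only [ne_iff_lt_or_gt, or_comm]

theorem sum_get_inv_count_smul {K M α : Type*} [DivisionRing K] [CharZero K] [AddCommGroup M]
    [Module K M] [DecidableEq α] (l : List α) (F : α → M) :
    ∑ i : Fin l.length, (l.count (l.get i) : K)⁻¹ • F (l.get i) = ∑ a ∈ l.toFinset, F a := by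
  have hlist := Fin.sum_univ_fun_getElem l fun a ↦ (l.count a : K)⁻¹ • F a
  refine hlist.trans ((Finset.sum_list_map_count l _).trans (Finset.sum_congr rfl fun a ha ↦ ?_))
  have hcount : (l.count a : K) ≠ 0 :=
    Nat.cast_ne_zero.2 (List.count_pos_iff.2 (List.mem_toFinset.1 ha)).ne'
  rw [← Nat.cast_smul_eq_nsmul K, smul_smul, mul_inv_cancel₀ hcount, one_smul]

end Regrouping

section TangentDecomposition

variable {ι : Type} [Fintype ι] [DecidableEq ι] {A : Matrix ι ι ℂ} {s : Finset ℂ}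
  {P : ℂ → Matrix ι ι ℂ} {L : ℕ}

theorem matTan_smul_mul_eq_zero {X : Matrix ι ι ℂ} {t : ℂ} (ht : IsUnit (matCos (t • A)).det)
    (h : A * X = 0) : matTan (t • A) * X = 0 := by
  rw [matTan_smul_mul (μ := 0) (L := 1) ht (by rw [zero_smul, sub_zero, pow_one, h])]
  simp

theorem iteratedDeriv_tan_neg (k : ℕ) (z : ℂ) :
    iteratedDeriv k Complex.tan (-z) = (-1) ^ (k + 1) * iteratedDeriv k Complex.tan z := by
  have hodd : -iteratedDeriv k Complex.tan z = (-1) ^ k * iteratedDeriv k Complex.tan (-z) := by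
    simpa only [Complex.tan_neg, iteratedDeriv_fun_neg, smul_eq_mul] using
      iteratedDeriv_comp_neg k Complex.tan z
  rw [pow_succ, mul_neg_one, neg_mul_comm, hodd, ← mul_assoc, ← mul_pow, neg_mul_neg, one_mul,
    one_pow, one_mul]

theorem matTan_smul_eq_sum (hP : ∑ μ ∈ s, P μ = 1)
    (hreal : ∀ μ ∈ s, μ.im = 0 → A * P μ = 0)
    (hnonreal : ∀ μ ∈ s, μ.im ≠ 0 → (A - μ • 1) ^ L * P μ = 0) {t : ℂ}
    (ht : IsUnit (matCos (t • A)).det) :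
    matTan (t • A) = ∑ μ ∈ s with μ.im ≠ 0, ∑ k ∈ Finset.range L,
      (t ^ k * iteratedDeriv k Complex.tan (μ * t)) •
        (((k.factorial : ℂ)⁻¹ • (A - μ • 1) ^ k) * P μ) := by
  have hsplit : matTan (t • A) = ∑ μ ∈ s, matTan (t • A) * P μ := by
    rw [← Finset.mul_sum, hP, mul_one]
  rw [hsplit, Finset.sum_filter]
  refine Finset.sum_congr rfl fun μ hμ ↦ ?_
  split_ifs with him
  · exact matTan_smul_mul ht (hnonreal μ hμ him)
  · exact matTan_smul_mul_eq_zero ht (hreal μ hμ (not_not.1 him))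

theorem exists_matTan_smul_eq_sum_im_pos (hs : ∀ μ ∈ s, -μ ∈ s) (hP : ∑ μ ∈ s, P μ = 1)
    (hreal : ∀ μ ∈ s, μ.im = 0 → A * P μ = 0)
    (hnonreal : ∀ μ ∈ s, μ.im ≠ 0 → (A - μ • 1) ^ L * P μ = 0) :
    ∃ C : ℂ → ℕ → Matrix ι ι ℂ, ∀ t : ℂ, IsUnit (matCos (t • A)).det →
      matTan (t • A) = ∑ μ ∈ s with 0 < μ.im, ∑ k ∈ Finset.range L,
        (t ^ k * iteratedDeriv k Complex.tan (μ * t)) • C μ k := by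
  let N (μ : ℂ) (k : ℕ) : Matrix ι ι ℂ := ((k.factorial : ℂ)⁻¹ • (A - μ • 1) ^ k) * P μ
  refine ⟨fun μ k ↦ N μ k + (-1 : ℂ) ^ (k + 1) • N (-μ) k, fun t ht ↦ ?_⟩
  rw [matTan_smul_eq_sum hP hreal hnonreal ht, sum_filter_im_ne_zero hs]
  refine Finset.sum_congr rfl fun μ _ ↦ ?_
  rw [← Finset.sum_add_distrib]
  refine Finset.sum_congr rfl fun k _ ↦ ?_
  rw [smul_add, smul_smul, neg_mul, iteratedDeriv_tan_neg, mul_left_comm, mul_comm ((-1) ^ (k + 1))]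

theorem exists_matTan_smul_eq_sum_get (hs : ∀ μ ∈ s, -μ ∈ s) (hP : ∑ μ ∈ s, P μ = 1)
    (hreal : ∀ μ ∈ s, μ.im = 0 → A * P μ = 0)
    (hnonreal : ∀ μ ∈ s, μ.im ≠ 0 → (A - μ • 1) ^ L * P μ = 0)
    {l : List ℂ} (hl : s.filter (0 < ·.im) = l.toFinset) :
    ∃ C : Fin l.length → Fin L → Matrix ι ι ℂ, ∀ t : ℂ, IsUnit (matCos (t • A)).det →
      matTan (t • A) = ∑ i, ∑ k : Fin L,
        (t ^ (k : ℕ) * iteratedDeriv k Complex.tan (l.get i * t)) • C i k := by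
  obtain ⟨C, hC⟩ := exists_matTan_smul_eq_sum_im_pos hs hP hreal hnonreal
  refine ⟨fun i k ↦ (l.count (l.get i) : ℂ)⁻¹ • C (l.get i) k, fun t ht ↦ ?_⟩
  rw [hC t ht, hl, ← sum_get_inv_count_smul (K := ℂ)]
  simp only [Finset.sum_range, Finset.smul_sum, smul_comm (_ : ℂ)⁻¹]

end TangentDecomposition

theorem exists_isSymm_dotProduct_mulVec_eq {ι K : Type*} [Fintype ι] [Field K] [CharZero K]
    (M : Matrix ι ι K) : ∃ Q : Matrix ι ι K, Q.IsSymm ∧ ∀ w, w ⬝ᵥ Q *ᵥ w = w ⬝ᵥ M *ᵥ w := by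
  refine ⟨(2 : K)⁻¹ • (M + Mᵀ), (Matrix.isSymm_add_transpose_self M).smul _, fun w ↦ ?_⟩
  have htr : w ⬝ᵥ Mᵀ *ᵥ w = w ⬝ᵥ M *ᵥ w := by
    rw [Matrix.mulVec_transpose, dotProduct_comm, ← Matrix.dotProduct_mulVec]
  rw [Matrix.smul_mulVec, Matrix.add_mulVec, dotProduct_smul, dotProduct_add, htr, ← two_mul,
    smul_eq_mul, inv_mul_cancel_left₀ two_ne_zero]

theorem statement15_general {ι : Type} [Fintype ι] [DecidableEq ι] (G S A : Matrix ι ι ℂ)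
    (hS : ∀ μ ∈ S.charpoly.roots, -μ ∈ S.charpoly.roots)
    (hreal : ∀ r : ℝ, ∀ v ∈ Module.End.maxGenEigenspace S.mulVecLin (r : ℂ), A *ᵥ v = 0)
    (hnonreal : ∀ μ : ℂ, μ.im ≠ 0 →
      ∀ v ∈ Module.End.maxGenEigenspace S.mulVecLin μ, A *ᵥ v = S *ᵥ v)
    (l : List ℂ) (hl : (l : Multiset ℂ) = S.charpoly.roots.filter (fun z ↦ 0 < z.im)) (ℓ : ℕ)
    (hℓ : ∀ μ : ℂ, ∀ v ∈ Module.End.maxGenEigenspace A.mulVecLin μ,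
      (A - μ • 1) ^ (ℓ + 1) *ᵥ v = 0) :
    ∃ Q : Fin l.length → Fin (ℓ + 1) → Matrix ι ι ℂ, (∀ i k, (Q i k)ᵀ = Q i k) ∧
      ∀ t : ℂ, IsUnit (matCos (t • A)).det → ∀ w : ι → ℂ,
        w ⬝ᵥ G *ᵥ (matTan (t • A) *ᵥ w) =
          ∑ i : Fin l.length, ∑ k : Fin (ℓ + 1),
            t ^ (k : ℕ) * iteratedDeriv (k : ℕ) Complex.tan (l.get i * t) *
              (w ⬝ᵥ Q i k *ᵥ w) := by
  obtain ⟨P, hsum, hPmem⟩ :=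
    exists_matrix_sum_eq_one_of_iSup_eq_top (iSup_roots_maxGenEigenspace_mulVecLin_eq_top S)
  have hrealP (μ : ℂ) (hμ : μ.im = 0) : A * P μ = 0 := by
    refine mul_eq_zero_of_mulVec_single_mem (hPmem μ) fun v hv ↦ hreal μ.re v ?_
    rwa [Complex.ext (w := μ) (Complex.ofReal_re _) (hμ ▸ Complex.ofReal_im _)]
  have hnonrealP (μ : ℂ) (hμ : μ.im ≠ 0) : (A - μ • 1) ^ (ℓ + 1) * P μ = 0 :=
    mul_eq_zero_of_mulVec_single_mem (hPmem μ) fun v hv ↦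
      hℓ μ v (maxGenEigenspace_le_of_eqOn (g := A.mulVecLin) (hnonreal μ hμ) hv)
  have hlist : S.charpoly.roots.toFinset.filter (0 < ·.im) = l.toFinset := by
    rw [← Multiset.toFinset_filter, ← hl]
    rfl
  obtain ⟨C, hC⟩ := exists_matTan_smul_eq_sum_get (by simpa using hS) hsum
    (fun μ _ ↦ hrealP μ) (fun μ _ ↦ hnonrealP μ) hlist
  choose Q hQsymm hQ using fun i k ↦ exists_isSymm_dotProduct_mulVec_eq (G * C i k)
  refine ⟨Q, hQsymm, fun t ht w ↦ ?_⟩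
  rw [hC t ht, Matrix.mulVec_mulVec]
  simp only [hQ, Matrix.mul_sum, Matrix.mul_smul, Matrix.sum_mulVec,
    Matrix.smul_mulVec, dotProduct_sum, dotProduct_smul, smul_eq_mul]

theorem isUnit_Jmat (n : ℕ) : IsUnit (Jmat n) := by
  have hsq : Jmat n * Jmat n = -1 := by
    simp [Jmat, Matrix.fromBlocks_multiply, ← Matrix.fromBlocks_one, Matrix.fromBlocks_neg]
  exact isUnit_of_mul_isUnit_left (y := Jmat n) (hsq ▸ isUnit_one.neg)

/-- let `±ω_1, …, ±ω_{n_1}` be the non-real eigenvalues of `S` (listed with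
multiplicity by `l`, `Im ω_j > 0`) and let `ℓ+1` be the dimension of the largest Jordan
block of `S_i`. Then there are quadratic forms `Q_{jk}` (given by symmetric matrices)
with `σ(w, tan(tS_i)w) = Σ_j Σ_k t^k tan^{(k)}(ω_j t) Q_{jk}(w)` whenever `cos(tS_i)` is
invertible. -/
theorem statement15 (n : ℕ) (S Si : Matrix (Idx n) (Idx n) ℂ)
    (hS : InSp n S) (hSi : IsImagPart n S Si)
    (l : List ℂ) (hl : (l : Multiset ℂ) = S.charpoly.roots.filter (fun z => 0 < z.im))
    (ℓ : ℕ)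
    (hub : ∀ μ : ℂ, ∀ z ∈ genEig n Si μ, ((Si - μ • 1) ^ (ℓ + 1)).mulVec z = 0)
    (hmax : ∃ μ : ℂ, ∃ z ∈ genEig n Si μ, ((Si - μ • 1) ^ ℓ).mulVec z ≠ 0) :
    ∃ Q : Fin l.length → Fin (ℓ + 1) → Matrix (Idx n) (Idx n) ℂ,
      (∀ i k, (Q i k)ᵀ = Q i k) ∧
      ∀ t : ℂ, IsUnit (matCos (t • Si)).det →
        ∀ w : Idx n → ℂ,
          sigmaC n w ((matTan (t • Si)).mulVec w) =
            ∑ i : Fin l.length, ∑ k : Fin (ℓ + 1), t ^ (k : ℕ) * iteratedDeriv (k : ℕ) Complex.tan (l.get i * t) *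
              (w ⬝ᵥ (Q i k).mulVec w) :=
  statement15_general (Jmat n) S Si (fun _ ↦ neg_mem_charpoly_roots (isUnit_Jmat n) hS)
    (fun r v hv ↦ hSi.1 v (Submodule.mem_iSup_of_mem r hv))
    (fun μ hμ v hv ↦ hSi.2 v (Submodule.mem_iSup_of_mem ⟨μ, hμ⟩ hv)) l hl ℓ hub
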